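/- Let T = (T_1,…,T_k) ∈ D_f^m(H). Then Δ_{f,T}^m(I) = 0 if and only if (id−Φ_{f_1,T_1}) ∘ ⋯ ∘ (id−Φ_{f_k,T_k})(I) = 0. -/

import Mathlib

open Filter Topology
open scoped InnerProductSpace Topology

noncomputable section

namespace NC

variable {H : Type*} [NormedAddCommGroup H] [InnerProductSpace ℂ H] [CompleteSpace H]

/-- The operator `X_w = X_{j_1} ⋯ X_{j_p}` associated with a word `w ∈ F_d⁺`. -/
def listProd {d : ℕ} (X : Fin d → (H →L[ℂ] H)) (w : List (Fin d)) : H →L[ℂ] H :=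
  (w.map X).prod

/-- `T_{1,β_1} ⋯ T_{k,β_k}` for a `k`-tuple of words `(β_1, …, β_k)`. -/
def tupleWord {k : ℕ} {n : Fin k → ℕ} (T : ∀ i, Fin (n i) → (H →L[ℂ] H))
    (w : ∀ i, List (Fin (n i))) : H →L[ℂ] H :=
  (List.ofFn fun i => listProd (T i) (w i)).prod

/-- the entries of `T_p` commute with the entries of `T_q` for `p ≠ q` -/
def CommutingTuples {k : ℕ} {n : Fin k → ℕ} (T : ∀ i, Fin (n i) → (H →L[ℂ] H)) : Prop :=
  ∀ i j, i ≠ j → ∀ p q, Commute (T i p) (T j q)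

/-- coefficients of a positive regular free holomorphic function in `d` noncommuting
indeterminates:  nonnegative coefficients, zero constant term, nonzero linear
coefficients, and finite radius-type limsup condition. -/
def PosRegCoeffs {d : ℕ} (c : List (Fin d) → ℝ) : Prop :=
  (∀ w, 0 ≤ c w) ∧ c [] = 0 ∧ (∀ j, 0 < c [j]) ∧
    ∃ C : ℝ, ∀ᶠ l : ℕ in atTop,
      (∑ w : Fin l → Fin d, (c (List.ofFn w)) ^ 2) ^ ((1 : ℝ) / (2 * l)) ≤ C

/-- partial sums of `Φ_{f,X}(Y) = Σ_{|w| ≥ 1} c_w X_w Y X_w^*` over words of length `≤ N` -/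
def phiPartial {d : ℕ} (c : List (Fin d) → ℝ) (X : Fin d → (H →L[ℂ] H))
    (Y : H →L[ℂ] H) (N : ℕ) : H →L[ℂ] H :=
  ∑ l ∈ Finset.Icc 1 N, ∑ w : Fin l → Fin d,
    ((c (List.ofFn w) : ℝ) : ℂ) •
      (listProd X (List.ofFn w) * Y * ContinuousLinearMap.adjoint (listProd X (List.ofFn w)))

/-- `Φ` is the map `Φ_{f,X}`, i.e. the WOT limit of the partial sums of
`Σ_{|w| ≥ 1} c_w X_w Y X_w^*`, for every `Y`. -/
def IsPhiMap {d : ℕ} (c : List (Fin d) → ℝ) (X : Fin d → (H →L[ℂ] H))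
    (Φ : Module.End ℂ (H →L[ℂ] H)) : Prop :=
  ∀ (Y : H →L[ℂ] H) (x y : H),
    Tendsto (fun N => ⟪(phiPartial c X Y N) x, y⟫_ℂ) atTop (𝓝 ⟪(Φ Y) x, y⟫_ℂ)

/-- `Δ_Φ^p := (id − Φ_1)^{p_1} ∘ ⋯ ∘ (id − Φ_k)^{p_k}` -/
def Delta {k : ℕ} (Φ : Fin k → Module.End ℂ (H →L[ℂ] H)) (p : Fin k → ℕ) :
    Module.End ℂ (H →L[ℂ] H) :=
  (List.ofFn fun i => (1 - Φ i) ^ (p i)).prod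

/-- `(id − Φ_1^{q_1}) ∘ ⋯ ∘ (id − Φ_k^{q_k})` -/
def DeltaPow {k : ℕ} (Φ : Fin k → Module.End ℂ (H →L[ℂ] H)) (q : Fin k → ℕ) :
    Module.End ℂ (H →L[ℂ] H) :=
  (List.ofFn fun i => 1 - (Φ i) ^ (q i)).prod

/-- membership in the noncommutative polydomain `D_f^m(H)`:  the coordinate tuples
commute with each other, the maps `Φ_{f_i,T_i}` are defined (as WOT limits),
`Φ_{f_i,T_i}(I) ≤ I`, and
`(id−Φ_{f_1,T_1})^{ε_1 m_1} ⋯ (id−Φ_{f_k,T_k})^{ε_k m_k}(I) ≥ 0` for all `ε_i ∈ {0,1}`. -/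
def MemPolydomain {k : ℕ} {n : Fin k → ℕ} (a : ∀ i, List (Fin (n i)) → ℝ)
    (m : Fin k → ℕ) (T : ∀ i, Fin (n i) → (H →L[ℂ] H)) : Prop :=
  CommutingTuples T ∧
  ∃ Φ : Fin k → Module.End ℂ (H →L[ℂ] H),
    (∀ i, IsPhiMap (a i) (T i) (Φ i)) ∧
    (∀ i, ((1 : H →L[ℂ] H) - Φ i 1).IsPositive) ∧
    (∀ ε : Fin k → Bool, ((Delta Φ fun i => if ε i then m i else 0) 1).IsPositive)

/-- purity of a tuple `T`, expressed through its `Φ`-maps: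
`(id−Φ_k^{q_k}) ⋯ (id−Φ_1^{q_1})(I) → I`. -/
def IsPure {k : ℕ} (Φ : Fin k → Module.End ℂ (H →L[ℂ] H)) : Prop :=
  ∀ x : H, Tendsto (fun q : Fin k → ℕ => ((DeltaPow Φ q) 1) x) atTop (𝓝 x)

end NC

namespace NC

section PowerBounded

variable {A : Type*} [CStarAlgebra A] [PartialOrder A] [StarOrderedRing A]

/-- A positive map on a C⋆-algebra with `φ 1 ≤ 1` is (pointwise) power bounded. -/
lemma exists_norm_pow_apply_le {φ : Module.End ℂ A} (hpos : ∀ a, 0 ≤ a → 0 ≤ φ a)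
    (hone : φ 1 ≤ 1) (a : A) : ∃ C : ℝ, ∀ N : ℕ, ‖(φ ^ N) a‖ ≤ C := by
  have hmem : a ∈ Submodule.span ℂ {a : A | 0 ≤ a} := by
    rw [CStarAlgebra.span_nonneg]; trivial
  induction hmem using Submodule.span_induction with
  | mem b hb =>
    have hb : 0 ≤ b := hb
    have key : ∀ N : ℕ, 0 ≤ (φ ^ N) b ∧ (φ ^ N) b ≤ ((‖b‖ : ℝ) : ℂ) • (1 : A) := by
      intro N
      induction N with
      | zero =>
        refine ⟨by simpa using hb, ?_⟩
        have h := IsSelfAdjoint.le_algebraMap_norm_self (IsSelfAdjoint.of_nonneg hb)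
        rw [Algebra.algebraMap_eq_smul_one] at h
        simpa using h
      | succ N ih =>
        rw [pow_succ', Module.End.mul_apply]
        refine ⟨hpos _ ih.1, ?_⟩
        have h1 := hpos _ (sub_nonneg.2 ih.2)
        rw [map_sub, sub_nonneg, map_smul] at h1
        refine h1.trans ?_
        have h2 : (‖b‖ : ℝ) • φ 1 ≤ (‖b‖ : ℝ) • (1 : A) :=
          smul_le_smul_of_nonneg_left hone (norm_nonneg b)
        simpa using h2
    exact ⟨_, fun N => CStarAlgebra.norm_le_norm_of_nonneg_of_le (key N).1 (key N).2⟩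
  | zero => exact ⟨0, by simp⟩
  | add x y _ _ hx hy =>
    obtain ⟨C, hC⟩ := hx
    obtain ⟨D, hD⟩ := hy
    refine ⟨C + D, fun N => ?_⟩
    rw [map_add]
    exact (norm_add_le _ _).trans (add_le_add (hC N) (hD N))
  | smul c x _ hx =>
    obtain ⟨C, hC⟩ := hx
    refine ⟨‖c‖ * C, fun N => ?_⟩
    rw [map_smul, norm_smul]
    exact mul_le_mul_of_nonneg_left (hC N) (norm_nonneg c)

end PowerBounded

/-- For a power bounded map `φ`, the generalized eigenspace at `1` is the eigenspace. -/
lemma one_sub_apply_eq_zero_of_pow {E : Type*} [NormedAddCommGroup E] [NormedSpace ℂ E]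
    {φ : Module.End ℂ E} (hφ : ∀ x, ∃ C : ℝ, ∀ N : ℕ, ‖(φ ^ N) x‖ ≤ C)
    {x : E} {r : ℕ} (hr : 1 ≤ r) (hx : ((1 - φ) ^ r) x = 0) : (1 - φ) x = 0 := by
  have two_step : ∀ y, (1 - φ) ((1 - φ) y) = 0 → (1 - φ) y = 0 := by
    intro y hy
    set e := (1 - φ) y with he
    have hfix : φ e = e := by
      rw [LinearMap.sub_apply, Module.End.one_apply, sub_eq_zero] at hy
      exact hy.symm
    have hφy : φ y = y - e := by simp [he]
    have hpow : ∀ N : ℕ, (φ ^ N) y = y - (N : ℂ) • e := by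
      intro N
      induction N with
      | zero => simp
      | succ N ih =>
        rw [pow_succ', Module.End.mul_apply, ih, map_sub, map_smul, hfix, hφy]
        push_cast
        module
    obtain ⟨C, hC⟩ := hφ y
    by_contra hne
    have hpos : 0 < ‖e‖ := norm_pos_iff.2 hne
    obtain ⟨N, hN⟩ := exists_nat_gt ((‖y‖ + C) / ‖e‖)
    rw [div_lt_iff₀ hpos] at hN
    have hNe : (N : ℂ) • e = y - (φ ^ N) y := by rw [hpow]; abel
    have hle : (N : ℝ) * ‖e‖ ≤ ‖y‖ + C := by
      calc (N : ℝ) * ‖e‖ = ‖(N : ℂ) • e‖ := by simp [norm_smul]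
        _ = ‖y - (φ ^ N) y‖ := by rw [hNe]
        _ ≤ ‖y‖ + C := (norm_sub_le _ _).trans (add_le_add le_rfl (hC N))
    linarith
  induction r, hr using Nat.le_induction with
  | base => simpa using hx
  | succ r hr ih =>
    obtain ⟨s, rfl⟩ := Nat.exists_eq_add_of_le' hr
    apply ih
    rw [pow_succ', pow_succ', Module.End.mul_apply, Module.End.mul_apply] at hx
    rw [pow_succ', Module.End.mul_apply]
    exact two_step _ hx

/-- If `A_1, …, A_k` commute and `ker A_i ^ {m_i} = ker A_i`, then
`ker (A_1 ^ {m_1} ⋯ A_k ^ {m_k}) = ker (A_1 ⋯ A_k)`. -/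
lemma prod_ofFn_pow_apply_eq_zero_iff {E : Type*} [AddCommGroup E] [Module ℂ E] {k : ℕ}
    (A : Fin k → Module.End ℂ E) (m : Fin k → ℕ) (hcomm : ∀ i j, Commute (A i) (A j))
    (hker : ∀ i x, (A i ^ m i) x = 0 ↔ A i x = 0) (x : E) :
    (List.ofFn fun i => A i ^ m i).prod x = 0 ↔ (List.ofFn fun i => A i ^ 1).prod x = 0 := by
  induction k generalizing x with
  | zero => simp
  | succ k ih =>
    have hswap : ∀ p : Fin k → ℕ, ∀ y,
        A 0 ((List.ofFn fun i : Fin k => A i.succ ^ p i).prod y) =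
          (List.ofFn fun i : Fin k => A i.succ ^ p i).prod (A 0 y) := by
      intro p y
      have hc : Commute (A 0) (List.ofFn fun i : Fin k => A i.succ ^ p i).prod := by
        refine Commute.list_prod_right _ _ fun B hB => ?_
        obtain ⟨i, rfl⟩ := (List.mem_ofFn' _ _).1 hB
        exact (hcomm 0 i.succ).pow_right _
      exact LinearMap.congr_fun hc.eq y
    rw [List.ofFn_succ, List.ofFn_succ, List.prod_cons, List.prod_cons,
      Module.End.mul_apply, Module.End.mul_apply, hker, pow_one, hswap, hswap]
    exact ih (fun i => A i.succ) (fun i => m i.succ) (fun i j => hcomm _ _)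
      (fun i => hker _) _

section PhiMap

variable {H : Type*} [NormedAddCommGroup H] [InnerProductSpace ℂ H]

open scoped ComplexOrder in
/-- Positivity passes to limits in the weak operator topology. -/
lemma nonneg_of_tendsto_inner {S : ℕ → (H →L[ℂ] H)} {L : H →L[ℂ] H}
    (hS : ∀ᶠ N in atTop, 0 ≤ S N)
    (hL : ∀ x, Tendsto (fun N => ⟪S N x, x⟫_ℂ) atTop (𝓝 ⟪L x, x⟫_ℂ)) : 0 ≤ L := by
  rw [ContinuousLinearMap.nonneg_iff_isPositive, ContinuousLinearMap.isPositive_iff_complex]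
  have hpos : ∀ x, 0 ≤ ⟪L x, x⟫_ℂ := fun x => by
    refine ge_of_tendsto (hL x) ?_
    filter_upwards [hS] with N hN
    exact ((ContinuousLinearMap.nonneg_iff_isPositive _).1 hN).inner_nonneg_left x
  intro x
  obtain ⟨hre, him⟩ := Complex.nonneg_iff.1 (hpos x)
  exact ⟨Complex.ext rfl him, hre⟩

lemma commute_listProd {d : ℕ} {X : Fin d → (H →L[ℂ] H)} {B : H →L[ℂ] H}
    (hB : ∀ p, Commute B (X p)) (w : List (Fin d)) : Commute B (listProd X w) := by
  refine Commute.list_prod_right _ _ fun C hC => ?_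
  obtain ⟨p, _, rfl⟩ := List.mem_map.1 hC
  exact hB p

variable [CompleteSpace H]

lemma phiPartial_term_nonneg {d : ℕ} {c : List (Fin d) → ℝ} (hc : ∀ w, 0 ≤ c w)
    (X : Fin d → (H →L[ℂ] H)) {Y : H →L[ℂ] H} (hY : 0 ≤ Y) (w : List (Fin d)) :
    0 ≤ ((c w : ℝ) : ℂ) •
      (listProd X w * Y * ContinuousLinearMap.adjoint (listProd X w)) := by
  rw [ContinuousLinearMap.nonneg_iff_isPositive] at hY ⊢
  exact (hY.conj_adjoint (listProd X w)).smul_of_nonneg (by exact_mod_cast hc w)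

lemma phiPartial_mono {d : ℕ} {c : List (Fin d) → ℝ} (hc : ∀ w, 0 ≤ c w)
    (X : Fin d → (H →L[ℂ] H)) {Y : H →L[ℂ] H} (hY : 0 ≤ Y) : Monotone (phiPartial c X Y) := by
  intro N M hNM
  refine Finset.sum_le_sum_of_subset_of_nonneg (Finset.Icc_subset_Icc_right hNM) ?_
  exact fun l _ _ => Finset.sum_nonneg fun w _ => phiPartial_term_nonneg hc X hY _

lemma phiPartial_nonneg {d : ℕ} {c : List (Fin d) → ℝ} (hc : ∀ w, 0 ≤ c w)
    (X : Fin d → (H →L[ℂ] H)) {Y : H →L[ℂ] H} (hY : 0 ≤ Y) (N : ℕ) : 0 ≤ phiPartial c X Y N :=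
  Finset.sum_nonneg fun _ _ => Finset.sum_nonneg fun _ _ => phiPartial_term_nonneg hc X hY _

lemma IsPhiMap.nonneg {d : ℕ} {c : List (Fin d) → ℝ} {X : Fin d → (H →L[ℂ] H)}
    {Φ : Module.End ℂ (H →L[ℂ] H)} (hΦ : IsPhiMap c X Φ) (hc : ∀ w, 0 ≤ c w)
    (Y : H →L[ℂ] H) (hY : 0 ≤ Y) : 0 ≤ Φ Y :=
  nonneg_of_tendsto_inner (Eventually.of_forall (phiPartial_nonneg hc X hY)) fun x => hΦ Y x x

lemma IsPhiMap.phiPartial_le {d : ℕ} {c : List (Fin d) → ℝ} {X : Fin d → (H →L[ℂ] H)}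
    {Φ : Module.End ℂ (H →L[ℂ] H)} (hΦ : IsPhiMap c X Φ) (hc : ∀ w, 0 ≤ c w)
    {Y : H →L[ℂ] H} (hY : 0 ≤ Y) (N : ℕ) : phiPartial c X Y N ≤ Φ Y := by
  rw [← sub_nonneg]
  refine nonneg_of_tendsto_inner (S := fun M => phiPartial c X Y M - phiPartial c X Y N) ?_ ?_
  · filter_upwards [eventually_ge_atTop N] with M hM
    exact sub_nonneg.2 (phiPartial_mono hc X hY hM)
  · intro x
    simp only [_root_.sub_apply, inner_sub_left]
    exact (hΦ Y x x).sub_const _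

lemma phiPartial_conj {d : ℕ} (c : List (Fin d) → ℝ) {X : Fin d → (H →L[ℂ] H)}
    {B : H →L[ℂ] H} (hB : ∀ p, Commute B (X p)) (Y : H →L[ℂ] H) (N : ℕ) :
    phiPartial c X (B * Y * ContinuousLinearMap.adjoint B) N =
      B * phiPartial c X Y N * ContinuousLinearMap.adjoint B := by
  simp only [phiPartial, Finset.mul_sum, Finset.sum_mul]
  refine Finset.sum_congr rfl fun l _ => Finset.sum_congr rfl fun w _ => ?_
  have h := (commute_listProd hB (List.ofFn w)).eq
  have h' := congrArg star h
  rw [star_mul, star_mul] at h'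
  simp only [← ContinuousLinearMap.star_eq_adjoint, mul_smul_comm, smul_mul_assoc, mul_assoc]
  rw [← h', ← mul_assoc, ← h, mul_assoc]

lemma IsPhiMap.map_conj {d : ℕ} {c : List (Fin d) → ℝ} {X : Fin d → (H →L[ℂ] H)}
    {Φ : Module.End ℂ (H →L[ℂ] H)} (hΦ : IsPhiMap c X Φ) {B : H →L[ℂ] H}
    (hB : ∀ p, Commute B (X p)) (Y : H →L[ℂ] H) :
    Φ (B * Y * ContinuousLinearMap.adjoint B) = B * Φ Y * ContinuousLinearMap.adjoint B := by
  refine ContinuousLinearMap.ext fun x => ext_inner_right ℂ fun y => ?_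
  refine tendsto_nhds_unique (hΦ _ x y) ?_
  simp only [phiPartial_conj c hB, mul_apply_eq_comp,
    ← ContinuousLinearMap.adjoint_inner_right B]
  exact hΦ Y _ _

lemma IsPhiMap.map_phiPartial {d e : ℕ} {c : List (Fin d) → ℝ} {X : Fin d → (H →L[ℂ] H)}
    {Φ : Module.End ℂ (H →L[ℂ] H)} (hΦ : IsPhiMap c X Φ) (b : List (Fin e) → ℝ)
    {Z : Fin e → (H →L[ℂ] H)} (hZX : ∀ q p, Commute (Z q) (X p)) (Y : H →L[ℂ] H) (N : ℕ) :
    Φ (phiPartial b Z Y N) = phiPartial b Z (Φ Y) N := by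
  simp only [phiPartial, map_sum, map_smul]
  refine Finset.sum_congr rfl fun l _ => Finset.sum_congr rfl fun w _ => ?_
  rw [hΦ.map_conj fun p => (commute_listProd (fun q => (hZX q p).symm) _).symm]

lemma IsPhiMap.comp_le {d e : ℕ} {c : List (Fin d) → ℝ} {X : Fin d → (H →L[ℂ] H)}
    {Φ : Module.End ℂ (H →L[ℂ] H)} (hΦ : IsPhiMap c X Φ) (hc : ∀ w, 0 ≤ c w)
    {b : List (Fin e) → ℝ} {Z : Fin e → (H →L[ℂ] H)} {Ψ : Module.End ℂ (H →L[ℂ] H)}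
    (hΨ : IsPhiMap b Z Ψ) (hb : ∀ w, 0 ≤ b w) (hZX : ∀ q p, Commute (Z q) (X p))
    {Y : H →L[ℂ] H} (hY : 0 ≤ Y) : Ψ (Φ Y) ≤ Φ (Ψ Y) := by
  rw [← sub_nonneg]
  refine nonneg_of_tendsto_inner (S := fun N => Φ (Ψ Y) - phiPartial b Z (Φ Y) N) ?_ ?_
  · refine Eventually.of_forall fun N => ?_
    rw [← hΦ.map_phiPartial b hZX, ← map_sub]
    exact hΦ.nonneg hc _ (sub_nonneg.2 (hΨ.phiPartial_le hb hY N))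
  · intro x
    simp only [_root_.sub_apply, inner_sub_left]
    exact (hΨ (Φ Y) x x).const_sub _

/-- The maps `Φ_{f,X}` and `Φ_{g,Z}` commute when the entries of `X` and `Z` do. -/
lemma IsPhiMap.commute {d e : ℕ} {c : List (Fin d) → ℝ} {X : Fin d → (H →L[ℂ] H)}
    {Φ : Module.End ℂ (H →L[ℂ] H)} (hΦ : IsPhiMap c X Φ) (hc : ∀ w, 0 ≤ c w)
    {b : List (Fin e) → ℝ} {Z : Fin e → (H →L[ℂ] H)} {Ψ : Module.End ℂ (H →L[ℂ] H)}
    (hΨ : IsPhiMap b Z Ψ) (hb : ∀ w, 0 ≤ b w) (hXZ : ∀ p q, Commute (X p) (Z q)) :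
    Commute Φ Ψ := by
  refine LinearMap.ext_on CStarAlgebra.span_nonneg fun Y hY => ?_
  exact le_antisymm (hΨ.comp_le hb hΦ hc hXZ hY)
    (hΦ.comp_le hc hΨ hb (fun q p => (hXZ p q).symm) hY)

end PhiMap

/-- **Proposition 1.7(iv) (Popescu).**  If `T = (T_1, …, T_k) ∈ D_f^m(H)`, then
`Δ_{f,T}^m(I) = 0` if and only if
`(id−Φ_{f_1,T_1}) ∘ ⋯ ∘ (id−Φ_{f_k,T_k})(I) = 0`. -/
theorem stmt_6 {H : Type*} [NormedAddCommGroup H] [InnerProductSpace ℂ H] [CompleteSpace H]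
    {k : ℕ} {n : Fin k → ℕ} (hn : ∀ i, 1 ≤ n i) {m : Fin k → ℕ} (hm : ∀ i, 1 ≤ m i)
    (a : ∀ i, List (Fin (n i)) → ℝ) (ha : ∀ i, PosRegCoeffs (a i))
    (T : ∀ i, Fin (n i) → (H →L[ℂ] H)) (hT : CommutingTuples T)
    (Φ : Fin k → Module.End ℂ (H →L[ℂ] H))
    (hΦ : ∀ i, IsPhiMap (a i) (T i) (Φ i))
    (hcontr : ∀ i, ((1 : H →L[ℂ] H) - Φ i 1).IsPositive)
    (hmem : ∀ ε : Fin k → Bool, ((Delta Φ fun i => if ε i then m i else 0) 1).IsPositive) :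
    (Delta Φ m) 1 = 0 ↔ (Delta Φ fun _ => 1) 1 = 0 := by
  have hcomm : ∀ i j, Commute (Φ i) (Φ j) := by
    intro i j
    by_cases hij : i = j
    · rw [hij]
    · exact (hΦ i).commute (ha i).1 (hΦ j) (ha j).1 (hT i j hij)
  refine prod_ofFn_pow_apply_eq_zero_iff (fun i => 1 - Φ i) m (fun i j => ?_) (fun i Y => ?_) 1
  · exact (Commute.one_left _).sub_left ((Commute.one_right _).sub_right (hcomm i j))
  · refine ⟨fun h => one_sub_apply_eq_zero_of_pow ?_ (hm i) h, fun h => ?_⟩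
    · exact exists_norm_pow_apply_le ((hΦ i).nonneg (ha i).1) (hcontr i)
    · rw [← Nat.sub_add_cancel (hm i), pow_succ, Module.End.mul_apply, h, map_zero]

end NC
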